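/- If T is a tree on n vertices (n ≥ 1) and r is any vertex of T, then T contains a subgraph that is a caterpillar on at least log₂ n vertices in which r is an endpoint of the spine. -/

import Mathlib

open scoped Classical

/-- A caterpillar whose spine is a path starting at the distinguished vertex `r`: a tree
in which every vertex is on, or adjacent to, a single path with endpoint `r`. -/
def IsCaterpillarFrom {V : Type*} (G : SimpleGraph V) (r : V) : Prop :=
  G.IsTree ∧ ∃ (v : V) (P : G.Walk r v), P.IsPath ∧
    ∀ w : V, w ∈ P.support ∨ ∃ x ∈ P.support, G.Adj w x

/-!
It suffices to find a path `P` from `r`, in a spanning tree, whose closed neighborhood satisfies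
`n ≤ 2 ^ |N[P]|`; the tree induced on `N[P]` is then the caterpillar. Delete an edge `rc` and apply
induction. If `rc` is not a bridge, nothing is lost. If it is, the larger of the components of `r`
and `c` has at least `n / 2` vertices; a path from `r` found there gains `c` in its closed
neighborhood, while a path from `c` is extended by `r`. Either way `|N[P]|` grows by at least one,
which makes up for the lost factor `2`.
-/

section ClosedNeighborSet

variable {V : Type*} {G G' : SimpleGraph V} {s t : Set V} {u v w : V}

/-- The closed neighborhood `N[s]` of a set `s` of vertices: the vertices that lie in `s` or have a
neighbor in `s`. A caterpillar is a tree that is the closed neighborhood of its spine. -/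
def closedNeighborSet (G : SimpleGraph V) (s : Set V) : Set V :=
  {w | w ∈ s ∨ ∃ x ∈ s, G.Adj w x}

theorem subset_closedNeighborSet (G : SimpleGraph V) (s : Set V) : s ⊆ closedNeighborSet G s :=
  fun _ hw => Or.inl hw

theorem closedNeighborSet_mono (hG : G ≤ G') (hst : s ⊆ t) :
    closedNeighborSet G s ⊆ closedNeighborSet G' t := by
  rintro w (hw | ⟨x, hx, hwx⟩)
  · exact Or.inl (hst hw)
  · exact Or.inr ⟨x, hst hx, hG hwx⟩

theorem reachable_of_mem_closedNeighborSet_support (P : G.Walk u v)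
    (hw : w ∈ closedNeighborSet G {x | x ∈ P.support}) : G.Reachable u w := by
  obtain hw | ⟨x, hx, hwx⟩ := hw
  · exact (P.takeUntil w hw).reachable
  · exact (P.takeUntil x hx).reachable.trans hwx.symm.reachable

theorem connected_induce_closedNeighborSet (hs : (G.induce s).Connected) :
    (G.induce (closedNeighborSet G s)).Connected := by
  obtain ⟨u, hu⟩ := hs.nonempty
  have reachable_of_mem {x : V} (hx : x ∈ s) :
      (G.induce (closedNeighborSet G s)).Reachable ⟨u, subset_closedNeighborSet G s hu⟩
        ⟨x, subset_closedNeighborSet G s hx⟩ :=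
    (hs.preconnected ⟨u, hu⟩ ⟨x, hx⟩).map
      (SimpleGraph.induceHomOfLE G (subset_closedNeighborSet G s)).toHom
  rw [SimpleGraph.connected_iff_exists_forall_reachable]
  refine ⟨⟨u, subset_closedNeighborSet G s hu⟩, ?_⟩
  rintro ⟨w, hw | ⟨x, hx, hwx⟩⟩
  · exact reachable_of_mem hw
  · exact (reachable_of_mem hx).trans (SimpleGraph.induce_adj.mpr hwx.symm).reachable

theorem isCaterpillarFrom_induce_closedNeighborSet (hG : G.IsAcyclic) {P : G.Walk u v}
    (hP : P.IsPath) :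
    IsCaterpillarFrom (G.induce (closedNeighborSet G {x | x ∈ P.support}))
      ⟨u, subset_closedNeighborSet G _ P.start_mem_support⟩ := by
  let Q := P.induce _ fun _ hx => subset_closedNeighborSet G {x | x ∈ P.support} hx
  have mem_support_Q (w) : w ∈ Q.support ↔ w.1 ∈ P.support := by
    simp [Q]
  have isPath_Q : Q.IsPath := by
    refine SimpleGraph.Walk.IsPath.of_map (f := (SimpleGraph.Embedding.induce _).toHom) ?_
    rwa [SimpleGraph.Walk.map_induce]
  refine ⟨⟨connected_induce_closedNeighborSet P.connected_induce_support, hG.induce _⟩,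
    _, Q, isPath_Q, ?_⟩
  rintro ⟨w, hw | ⟨x, hx, hwx⟩⟩
  · exact Or.inl ((mem_support_Q _).mpr hw)
  · exact Or.inr ⟨⟨x, subset_closedNeighborSet G _ hx⟩, (mem_support_Q _).mpr hx, hwx⟩

end ClosedNeighborSet

section LargeClosedNeighborSet

variable {V : Type*} {G G' : SimpleGraph V} {r c : V}

theorem reachable_deleteEdges_left_or_right {w : V} (h : G.Reachable r w) :
    (G.deleteEdges {s(r, c)}).Reachable r w ∨ (G.deleteEdges {s(r, c)}).Reachable c w := by
  rw [SimpleGraph.reachable_iff_reflTransGen] at h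
  induction h with
  | refl => exact Or.inl .rfl
  | @tail x y _ hxy ih =>
    by_cases he : s(x, y) = s(r, c)
    · obtain ⟨-, rfl⟩ | ⟨-, rfl⟩ := Sym2.eq_iff.mp he
      · exact Or.inr .rfl
      · exact Or.inl .rfl
    · have hxy' : (G.deleteEdges {s(r, c)}).Reachable x y :=
        (SimpleGraph.deleteEdges_adj.mpr ⟨hxy, he⟩).reachable
      exact ih.imp (·.trans hxy') (·.trans hxy')

theorem deleteEdges_singleton_lt_of_adj (h : G.Adj r c) : G.deleteEdges {s(r, c)} < G :=
  (G.deleteEdges_le _).lt_of_not_ge fun hle => by simpa using hle h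

theorem setOf_reachable_eq_singleton (h : ∀ c, ¬ G.Adj r c) : {w | G.Reachable r w} = {r} := by
  refine Set.Subset.antisymm (fun w hw => ?_) (by simp)
  by_contra hne
  obtain ⟨c, hrc⟩ := hw.nonempty_neighborSet_left (Ne.symm hne)
  exact h c hrc

theorem closedNeighborSet_support_ssubset_mapLe {v : V} (hle : G' ≤ G) (hrc : G.Adj r c)
    (hsep : ¬ G'.Reachable r c) (P : G'.Walk r v) :
    closedNeighborSet G' {x | x ∈ P.support} ⊂
      closedNeighborSet G {x | x ∈ (P.mapLe hle).support} := by
  refine (Set.ssubset_iff_of_subset (closedNeighborSet_mono hle (by simp))).mpr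
    ⟨c, Or.inr ⟨r, SimpleGraph.Walk.start_mem_support _, hrc.symm⟩, fun hc => ?_⟩
  exact hsep (reachable_of_mem_closedNeighborSet_support P hc)

theorem closedNeighborSet_support_ssubset_cons {v : V} (hle : G' ≤ G) (hrc : G.Adj r c)
    (hsep : ¬ G'.Reachable r c) (P : G'.Walk c v) :
    closedNeighborSet G' {x | x ∈ P.support} ⊂
      closedNeighborSet G {x | x ∈ ((P.mapLe hle).cons hrc).support} := by
  refine (Set.ssubset_iff_of_subset
    (closedNeighborSet_mono hle fun x hx => by simpa using .inr hx)).mpr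
    ⟨r, Or.inl (SimpleGraph.Walk.start_mem_support _), fun hr => ?_⟩
  exact hsep (reachable_of_mem_closedNeighborSet_support P hr).symm

theorem two_mul_two_pow_ncard_le_of_ssubset [Finite V] {s t : Set V} (h : s ⊂ t) :
    2 * 2 ^ s.ncard ≤ 2 ^ t.ncard := by
  rw [← pow_succ']
  exact Nat.pow_le_pow_right two_pos (Set.ncard_lt_ncard h)

theorem exists_isPath_ncard_reachable_le_two_pow [Finite V] (G : SimpleGraph V) (r : V) :
    ∃ (v : V) (P : G.Walk r v), P.IsPath ∧
      {w | G.Reachable r w}.ncard ≤ 2 ^ (closedNeighborSet G {x | x ∈ P.support}).ncard := by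
  induction G using WellFoundedLT.induction generalizing r with
  | ind G ih =>
  by_cases hr : ∀ c, ¬ G.Adj r c
  · refine ⟨r, .nil, .nil, ?_⟩
    rw [setOf_reachable_eq_singleton hr, Set.ncard_singleton]
    exact Nat.one_le_two_pow
  obtain ⟨c, hrc⟩ := not_forall_not.mp hr
  obtain ⟨G', hlt, hsplit⟩ :
      ∃ G' < G, ∀ w, G.Reachable r w → G'.Reachable r w ∨ G'.Reachable c w :=
    ⟨_, deleteEdges_singleton_lt_of_adj hrc, fun _ => reachable_deleteEdges_left_or_right⟩
  obtain ⟨u, P, hP, hPcard⟩ := ih G' hlt r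
  by_cases hsep : G'.Reachable r c
  · refine ⟨u, P.mapLe hlt.le, hP.mapLe hlt.le, ?_⟩
    calc {w | G.Reachable r w}.ncard
        ≤ {w | G'.Reachable r w}.ncard :=
          Set.ncard_le_ncard fun w hw => (hsplit w hw).elim id hsep.trans
      _ ≤ 2 ^ (closedNeighborSet G' {x | x ∈ P.support}).ncard := hPcard
      _ ≤ _ := Nat.pow_le_pow_right two_pos
          (Set.ncard_le_ncard (closedNeighborSet_mono hlt.le (by simp)))
  obtain ⟨v, Q, hQ, hQcard⟩ := ih G' hlt c
  have hcard : {w | G.Reachable r w}.ncard ≤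
      {w | G'.Reachable r w}.ncard + {w | G'.Reachable c w}.ncard :=
    (Set.ncard_le_ncard hsplit).trans (Set.ncard_union_le _ _)
  obtain hle | hle := le_total {w | G'.Reachable c w}.ncard {w | G'.Reachable r w}.ncard
  · have hdouble := two_mul_two_pow_ncard_le_of_ssubset
      (closedNeighborSet_support_ssubset_mapLe hlt.le hrc hsep P)
    exact ⟨u, P.mapLe hlt.le, hP.mapLe hlt.le, by lia⟩
  · have hdouble := two_mul_two_pow_ncard_le_of_ssubset
      (closedNeighborSet_support_ssubset_cons hlt.le hrc hsep Q)
    have hrQ : r ∉ Q.support := fun h => hsep (Q.takeUntil r h).reachable.symm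
    exact ⟨v, (Q.mapLe hlt.le).cons hrc, (hQ.mapLe hlt.le).cons (by simpa using hrQ), by lia⟩

end LargeClosedNeighborSet

theorem coe_induce_toSubgraph {V : Type*} {G H : SimpleGraph V} (h : H ≤ G) (s : Set V) :
    ((SimpleGraph.toSubgraph H h).induce s).coe = H.induce s := by
  ext x y
  exact ⟨fun hxy => hxy.2.2, fun hxy => ⟨x.2, y.2, hxy⟩⟩

theorem tree_contains_large_caterpillar_from_general {V : Type*} [Fintype V] (G : SimpleGraph V)
    (hG : G.Connected) (r : V) :
    ∃ H : G.Subgraph, ∃ hr : r ∈ H.verts,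
      IsCaterpillarFrom H.coe ⟨r, hr⟩ ∧
      Real.logb 2 (Fintype.card V) ≤ (H.verts.ncard : ℝ) := by
  obtain ⟨T, hTG, hT⟩ := hG.exists_isTree_le
  obtain ⟨v, P, hP, hcard⟩ := exists_isPath_ncard_reachable_le_two_pow T r
  refine ⟨(SimpleGraph.toSubgraph T hTG).induce (closedNeighborSet T {x | x ∈ P.support}),
    subset_closedNeighborSet T _ P.start_mem_support, ?_, ?_⟩
  · rw [coe_induce_toSubgraph]
    exact isCaterpillarFrom_induce_closedNeighborSet hT.isAcyclic hP
  · have reachable_eq_univ : {w | T.Reachable r w} = Set.univ :=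
      Set.eq_univ_of_forall (hT.connected.preconnected r)
    rw [reachable_eq_univ, Set.ncard_univ, Nat.card_eq_fintype_card] at hcard
    rw [Real.logb_le_iff_le_rpow one_lt_two (by exact_mod_cast Fintype.card_pos_iff.mpr ⟨r⟩),
      Real.rpow_natCast]
    exact_mod_cast hcard

/-- Every tree on `n ≥ 1` vertices contains, for any prescribed vertex `r`, a caterpillar
on at least `log₂ n` vertices as a subgraph in which `r` is an endpoint of the spine. -/
theorem tree_contains_large_caterpillar_from {V : Type*} [Fintype V] (G : SimpleGraph V)
    (hG : G.IsTree) (r : V) :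
    ∃ H : G.Subgraph, ∃ hr : r ∈ H.verts,
      IsCaterpillarFrom H.coe ⟨r, hr⟩ ∧
      Real.logb 2 (Fintype.card V) ≤ (H.verts.ncard : ℝ) :=
  tree_contains_large_caterpillar_from_general G hG.connected r
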